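/- Let d ≥ 1, q > 1/2, δ > 0 and y ∈ ℝ^d. For every smooth function u : ℝ^d → ℂ all of whose derivatives are bounded, the following integration-by-parts identity holds: ∫ φ_{δ,y} |u|^{2q} · conj(u) · Δu dx = −∫ |u|^{2q} conj(u) (∇φ_{δ,y} · ∇u) dx − (q+1) ∫ φ_{δ,y} |u|^{2q} |∇u|² dx − q ∫ φ_{δ,y} |u|^{2q−2} conj(u)² (∇u · ∇u) dx, where ∇u · ∇u = Σ_j (∂_j u)², |∇u|² = Σ_j |∂_j u|², and the integrand of the last integral is defined to be 0 at points where u vanishes. -/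

import Mathlib

open Complex

/-- The weight function `φ_{δ,y}(x) = exp(−√(1+δ²|x−y|²))` on `ℝ^d`. -/
noncomputable def phi (d : ℕ) (δ : ℝ) (y x : EuclideanSpace ℝ (Fin d)) : ℝ :=
  Real.exp (-Real.sqrt (1 + δ ^ 2 * ‖x - y‖ ^ 2))

/-- The Laplacian `Δu(x) = Σ_j ∂²_j u(x)` of `u : ℝ^d → ℂ`. -/
noncomputable def lap (d : ℕ) (u : EuclideanSpace ℝ (Fin d) → ℂ)
    (x : EuclideanSpace ℝ (Fin d)) : ℂ :=
  ∑ j : Fin d, iteratedFDeriv ℝ 2 u x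
    ![EuclideanSpace.single j (1 : ℝ), EuclideanSpace.single j (1 : ℝ)]

open MeasureTheory

section Weight

variable {d : ℕ} {δ : ℝ} {y : EuclideanSpace ℝ (Fin d)}

lemma phi_pos (x : EuclideanSpace ℝ (Fin d)) : 0 < phi d δ y x := Real.exp_pos _

lemma contDiff_phi : ContDiff ℝ 1 (phi d δ y) := by
  unfold phi
  refine Real.contDiff_exp.comp (ContDiff.neg (ContDiff.sqrt ?_ fun x => ?_))
  · exact contDiff_const.add (contDiff_const.mul ((contDiff_id.sub contDiff_const).norm_sq ℝ))
  · positivity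

lemma norm_fderiv_phi_apply_le (hδ : 0 < δ) (x v : EuclideanSpace ℝ (Fin d)) :
    ‖fderiv ℝ (phi d δ y) x v‖ ≤ δ * ‖v‖ * phi d δ y x := by
  have hpos : 0 < 1 + δ ^ 2 * ‖x - y‖ ^ 2 := by positivity
  have h1 := ((hasFDerivAt_id x).sub_const y).norm_sq
  have h2 := (((h1.const_mul (δ ^ 2)).const_add 1).sqrt hpos.ne').neg.exp
  have h3 : HasFDerivAt (phi d δ y) _ x := h2
  rw [h3.fderiv]
  set s := Real.sqrt (1 + δ ^ 2 * ‖x - y‖ ^ 2) with hs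
  have hs0 : 0 < s := Real.sqrt_pos.2 hpos
  have hle : δ * ‖x - y‖ ≤ s := Real.le_sqrt_of_sq_le (by nlinarith)
  have hin : |inner ℝ (x - y) v| ≤ ‖x - y‖ * ‖v‖ := abs_real_inner_le_norm _ _
  have key : |δ ^ 2 * inner ℝ (x - y) v / s| ≤ δ * ‖v‖ := by
    rw [abs_div, abs_mul, abs_of_pos hs0, abs_of_pos (by positivity : 0 < δ ^ 2),
      div_le_iff₀ hs0]
    calc δ ^ 2 * |inner ℝ (x - y) v| ≤ δ ^ 2 * (‖x - y‖ * ‖v‖) := by gcongr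
      _ = δ * ‖v‖ * (δ * ‖x - y‖) := by ring
      _ ≤ δ * ‖v‖ * s := by gcongr
  have hphi : phi d δ y x = Real.exp (-s) := rfl
  rw [hphi]
  calc _ = Real.exp (-s) * |δ ^ 2 * inner ℝ (x - y) v / s| := by
        rw [show δ ^ 2 * inner ℝ (x - y) v / s =
          s⁻¹ * 2⁻¹ * (δ ^ 2 * (2 * inner ℝ (x - y) v)) by field_simp]
        simp [← hs, inner_sub_left]
    _ ≤ Real.exp (-s) * (δ * ‖v‖) := by gcongr
    _ = _ := by ring

lemma integrable_phi (hδ : 0 < δ) : Integrable (phi d δ y) := by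
  have hint : Integrable
      (fun x : EuclideanSpace ℝ (Fin d) => (1 + ‖x‖) ^ (-((d : ℝ) + 1))) :=
    integrable_one_add_norm (by simp)
  have hint' := hint.comp_sub_right y
  set c := min 1 δ / 2 with hc
  have hc0 : 0 < c := by positivity
  refine (hint'.const_mul ((d + 1).factorial / c ^ (d + 1))).mono'
    contDiff_phi.continuous.aestronglyMeasurable (Filter.Eventually.of_forall fun x => ?_)
  rw [Real.norm_of_nonneg (phi_pos x).le]
  set t := ‖x - y‖ with ht
  have ht0 : 0 ≤ t := norm_nonneg _
  have hs : c * (1 + t) ≤ Real.sqrt (1 + δ ^ 2 * t ^ 2) := by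
    apply Real.le_sqrt_of_sq_le
    have h1 : c ≤ 1 / 2 := by rw [hc]; linarith [min_le_left 1 δ]
    have h2 : c ≤ δ / 2 := by rw [hc]; linarith [min_le_right 1 δ]
    have h3 : c * (1 + t) ≤ 1 / 2 + δ / 2 * t := by nlinarith
    calc (c * (1 + t)) ^ 2 ≤ (1 / 2 + δ / 2 * t) ^ 2 := by gcongr
      _ ≤ _ := by nlinarith [sq_nonneg (1 - δ * t), mul_nonneg hδ.le ht0]
  have hexp := Real.pow_div_factorial_le_exp (c * (1 + t)) (by positivity) (d + 1)
  have hr : (1 + t) ^ (-((d : ℝ) + 1)) = ((1 + t) ^ (d + 1))⁻¹ := by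
    rw [Real.rpow_neg (by positivity)]
    congr 1
    exact_mod_cast Real.rpow_natCast (1 + t) (d + 1)
  rw [hr]
  calc phi d δ y x ≤ Real.exp (-(c * (1 + t))) := Real.exp_le_exp.2 (neg_le_neg hs)
    _ = (Real.exp (c * (1 + t)))⁻¹ := Real.exp_neg _
    _ ≤ ((c * (1 + t)) ^ (d + 1) / (d + 1).factorial)⁻¹ := by gcongr
    _ = _ := by rw [mul_pow]; field_simp

/-- A measurable function dominated by a multiple of the weight is integrable. -/
lemma integrable_of_norm_le_phi (hδ : 0 < δ) {F : EuclideanSpace ℝ (Fin d) → ℂ}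
    (hF : Measurable F) {C : ℝ} (hC : ∀ x, ‖F x‖ ≤ C * phi d δ y x) : Integrable F :=
  ((integrable_phi hδ).const_mul C).mono' hF.aestronglyMeasurable
    (Filter.Eventually.of_forall hC)

end Weight

section PowerNonlinearity

variable {E : Type*} [NormedAddCommGroup E] [NormedSpace ℝ E]

lemma norm_rpow_sub_two_mul_sq {q : ℝ} (hq : 1 / 2 < q) (z : ℂ) :
    ‖z‖ ^ (2 * q - 2) * ‖z‖ ^ 2 = ‖z‖ ^ (2 * q) := by
  rw [← Real.rpow_natCast, ← Real.rpow_add' (norm_nonneg z) (by norm_num; linarith)]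
  norm_num

/-- `q |z|^{2q-2} · 2 Re(z̄ w) · z̄ w = q (|z|^{2q-2} z̄² w² + |z|^{2q} |w|²)`. -/
lemma rpow_mul_inner_mul_conj_mul {q : ℝ} (hq : 1 / 2 < q) (z w : ℂ) :
    ((2 * q * ‖z‖ ^ (2 * q - 2) * inner ℝ z w : ℝ) : ℂ) * (starRingEnd ℂ) z * w =
      q * (((‖z‖ ^ (2 * q - 2) : ℝ) : ℂ) * (starRingEnd ℂ) z ^ 2 * w ^ 2) +
        q * (((‖z‖ ^ (2 * q) : ℝ) : ℂ) * ((‖w‖ ^ 2 : ℝ) : ℂ)) := by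
  have hin : ((inner ℝ z w : ℝ) : ℂ) * 2 =
      (starRingEnd ℂ) z * w + z * (starRingEnd ℂ) w := by
    rw [Complex.inner, Complex.re_eq_add_conj]
    simp
    ring
  have hz2 : ((‖z‖ ^ 2 : ℝ) : ℂ) = z * (starRingEnd ℂ) z := by
    rw [Complex.mul_conj, Complex.normSq_eq_norm_sq]
  have hw2 : ((‖w‖ ^ 2 : ℝ) : ℂ) = w * (starRingEnd ℂ) w := by
    rw [Complex.mul_conj, Complex.normSq_eq_norm_sq]
  rw [hw2, ← norm_rpow_sub_two_mul_sq hq, Complex.ofReal_mul (‖z‖ ^ (2 * q - 2)), hz2]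
  push_cast
  linear_combination (q : ℂ) * ((‖z‖ ^ (2 * q - 2) : ℝ) : ℂ) * (starRingEnd ℂ) z * w * hin

/-- The derivative of `φ |u|^{2q} ū` paired with the derivative of `u`. -/
lemma fderiv_weight_mul_rpow_mul_conj {q : ℝ} (hq : 1 / 2 < q) {φ : E → ℝ} {u : E → ℂ} {x : E}
    (hφ : DifferentiableAt ℝ φ x) (hu : DifferentiableAt ℝ u x) :
    ∃ L : E →L[ℝ] ℂ, HasFDerivAt
        (fun x => (φ x : ℂ) * ((‖u x‖ ^ (2 * q) : ℝ) : ℂ) * (starRingEnd ℂ) (u x)) L x ∧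
      ∀ v, L v * fderiv ℝ u x v =
        ((‖u x‖ ^ (2 * q) : ℝ) : ℂ) * (starRingEnd ℂ) (u x) *
          (((fderiv ℝ φ x v : ℝ) : ℂ) * fderiv ℝ u x v) +
        ((q : ℂ) + 1) * ((φ x : ℂ) * ((‖u x‖ ^ (2 * q) : ℝ) : ℂ) *
          ((‖fderiv ℝ u x v‖ ^ 2 : ℝ) : ℂ)) +
        q * ((φ x : ℂ) * ((‖u x‖ ^ (2 * q - 2) : ℝ) : ℂ) * (starRingEnd ℂ) (u x) ^ 2 *
          (fderiv ℝ u x v) ^ 2) := by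
  have hN := (hasFDerivAt_norm_rpow (u x) (by linarith : 1 < 2 * q)).comp x hu.hasFDerivAt
  have hφ' := Complex.ofRealCLM.hasFDerivAt.comp x hφ.hasFDerivAt
  have hN' := Complex.ofRealCLM.hasFDerivAt.comp x hN
  have hc := Complex.conjCLE.toContinuousLinearMap.hasFDerivAt.comp x hu.hasFDerivAt
  refine ⟨_, (hφ'.mul hN').mul hc, fun v => ?_⟩
  have key := rpow_mul_inner_mul_conj_mul hq (u x) (fderiv ℝ u x v)
  have hw2 : ((‖fderiv ℝ u x v‖ ^ 2 : ℝ) : ℂ) =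
      fderiv ℝ u x v * (starRingEnd ℂ) (fderiv ℝ u x v) := by
    rw [Complex.mul_conj, Complex.normSq_eq_norm_sq]
  rw [hw2] at key ⊢
  simp only [add_apply, smul_apply, Pi.mul_apply,
    ContinuousLinearMap.comp_apply, Complex.ofRealCLM_apply, Function.comp_apply,
    innerSL_apply_apply, smul_eq_mul, Complex.conjCLE_apply,
    ContinuousLinearEquiv.coe_coe] at key ⊢
  linear_combination (φ x : ℂ) * key

end PowerNonlinearity

section Directional

variable {d : ℕ} {q δ : ℝ} {y : EuclideanSpace ℝ (Fin d)} {u : EuclideanSpace ℝ (Fin d) → ℂ}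

lemma integrable_rpow_mul_conj_mul_fderiv (hq : 1 / 2 < q) (hδ : 0 < δ) (hu : ContDiff ℝ 1 u)
    {B₀ B₁ : ℝ} (hB₀ : ∀ x, ‖u x‖ ≤ B₀) (v : EuclideanSpace ℝ (Fin d))
    (hB₁ : ∀ x, ‖fderiv ℝ u x v‖ ≤ B₁) :
    Integrable fun x => ((‖u x‖ ^ (2 * q) : ℝ) : ℂ) * (starRingEnd ℂ) (u x) *
      (((fderiv ℝ (phi d δ y) x v : ℝ) : ℂ) * fderiv ℝ u x v) := by
  have hm := hu.continuous.measurable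
  have hm1 := (hu.continuous_fderiv_apply one_ne_zero).comp
    (Continuous.prodMk_left v) |>.measurable
  have hm2 := (contDiff_phi (δ := δ) (y := y)).continuous_fderiv_apply one_ne_zero |>.comp
    (Continuous.prodMk_left v) |>.measurable
  have hB₀' : 0 ≤ B₀ := (norm_nonneg _).trans (hB₀ 0)
  refine integrable_of_norm_le_phi (y := y) hδ (C := B₀ ^ (2 * q) * B₀ * (δ * ‖v‖ * B₁)) ?_
    fun x => ?_
  · exact ((Complex.measurable_ofReal.comp (hm.norm.pow_const _)).mul
      (Complex.continuous_conj.measurable.comp hm)).mul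
      ((Complex.measurable_ofReal.comp hm2).mul hm1)
  · have h := norm_fderiv_phi_apply_le (y := y) hδ x v
    have hp := phi_pos (δ := δ) (y := y) x
    rw [norm_mul, norm_mul, norm_mul, RCLike.norm_conj, Complex.norm_real, Complex.norm_real,
      Real.norm_of_nonneg (by positivity : (0 : ℝ) ≤ ‖u x‖ ^ (2 * q))]
    calc _ ≤ B₀ ^ (2 * q) * B₀ * ((δ * ‖v‖ * phi d δ y x) * B₁) := by
          gcongr
          exacts [hB₀ x, hB₀ x, hB₁ x]
      _ = _ := by ring

lemma integrable_phi_mul_rpow_mul (hq : 1 / 2 < q) (hδ : 0 < δ) (hu : ContDiff ℝ 1 u)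
    {B₀ C : ℝ} (hB₀ : ∀ x, ‖u x‖ ≤ B₀) {F : EuclideanSpace ℝ (Fin d) → ℂ} (hF : Measurable F)
    (hC : ∀ x, ‖F x‖ ≤ C) :
    Integrable fun x => (phi d δ y x : ℂ) * ((‖u x‖ ^ (2 * q) : ℝ) : ℂ) * F x := by
  have hm := hu.continuous.measurable
  have hB₀' : 0 ≤ B₀ := (norm_nonneg _).trans (hB₀ 0)
  refine integrable_of_norm_le_phi (y := y) hδ (C := B₀ ^ (2 * q) * C) ?_ fun x => ?_
  · exact ((Complex.measurable_ofReal.comp contDiff_phi.continuous.measurable).mul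
      (Complex.measurable_ofReal.comp (hm.norm.pow_const _))).mul hF
  · have hp := phi_pos (δ := δ) (y := y) x
    rw [norm_mul, norm_mul, Complex.norm_real, Complex.norm_real, Real.norm_of_nonneg hp.le,
      Real.norm_of_nonneg (by positivity : (0 : ℝ) ≤ ‖u x‖ ^ (2 * q))]
    calc _ ≤ phi d δ y x * B₀ ^ (2 * q) * C := by
          gcongr
          exacts [hB₀ x, hC x]
      _ = _ := by ring

lemma integrable_phi_mul_rpow_sub_two_mul (hq : 1 / 2 < q) (hδ : 0 < δ) (hu : ContDiff ℝ 1 u)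
    {B₀ C : ℝ} (hB₀ : ∀ x, ‖u x‖ ≤ B₀) {F : EuclideanSpace ℝ (Fin d) → ℂ} (hF : Measurable F)
    (hC : ∀ x, ‖F x‖ ≤ C) :
    Integrable fun x => (phi d δ y x : ℂ) * ((‖u x‖ ^ (2 * q - 2) : ℝ) : ℂ) *
      (starRingEnd ℂ) (u x) ^ 2 * F x := by
  have hm := hu.continuous.measurable
  refine (integrable_phi_mul_rpow_mul (y := y) hq hδ hu hB₀ hF hC).mono ?_
    (Filter.Eventually.of_forall fun x => ?_)
  · exact (((Complex.measurable_ofReal.comp contDiff_phi.continuous.measurable).mul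
      (Complex.measurable_ofReal.comp (hm.norm.pow_const _))).mul
      ((Complex.continuous_conj.measurable.comp hm).pow_const 2)).mul hF |>.aestronglyMeasurable
  · simp only [norm_mul, norm_pow, RCLike.norm_conj, Complex.norm_real]
    rw [Real.norm_of_nonneg (by positivity : (0 : ℝ) ≤ ‖u x‖ ^ (2 * q)),
      Real.norm_of_nonneg (by positivity : (0 : ℝ) ≤ ‖u x‖ ^ (2 * q - 2)),
      ← norm_rpow_sub_two_mul_sq hq, mul_assoc ‖phi d δ y x‖]

/-- Integration by parts in a single direction `v`. -/
lemma integral_phi_mul_rpow_mul_conj_mul_iteratedFDeriv (hq : 1 / 2 < q) (hδ : 0 < δ)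
    (hu : ContDiff ℝ 2 u) {B₀ B₁ B₂ : ℝ} (hB₀ : ∀ x, ‖u x‖ ≤ B₀)
    (v : EuclideanSpace ℝ (Fin d)) (hB₁ : ∀ x, ‖fderiv ℝ u x v‖ ≤ B₁)
    (hB₂ : ∀ x, ‖iteratedFDeriv ℝ 2 u x ![v, v]‖ ≤ B₂) :
    Integrable (fun x => (phi d δ y x : ℂ) * ((‖u x‖ ^ (2 * q) : ℝ) : ℂ) *
        (starRingEnd ℂ) (u x) * iteratedFDeriv ℝ 2 u x ![v, v]) ∧
    Integrable (fun x => (phi d δ y x : ℂ) * ((‖u x‖ ^ (2 * q) : ℝ) : ℂ) *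
          ((‖fderiv ℝ u x v‖ ^ 2 : ℝ) : ℂ)) ∧
    Integrable (fun x => (phi d δ y x : ℂ) * ((‖u x‖ ^ (2 * q - 2) : ℝ) : ℂ) *
          (starRingEnd ℂ) (u x) ^ 2 * (fderiv ℝ u x v) ^ 2) ∧
    (∫ x, (phi d δ y x : ℂ) * ((‖u x‖ ^ (2 * q) : ℝ) : ℂ) *
        (starRingEnd ℂ) (u x) * iteratedFDeriv ℝ 2 u x ![v, v]) =
      -(∫ x, ((‖u x‖ ^ (2 * q) : ℝ) : ℂ) * (starRingEnd ℂ) (u x) *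
          (((fderiv ℝ (phi d δ y) x v : ℝ) : ℂ) * fderiv ℝ u x v))
      - ((q : ℂ) + 1) * (∫ x, (phi d δ y x : ℂ) * ((‖u x‖ ^ (2 * q) : ℝ) : ℂ) *
          ((‖fderiv ℝ u x v‖ ^ 2 : ℝ) : ℂ))
      - (q : ℂ) * (∫ x, (phi d δ y x : ℂ) * ((‖u x‖ ^ (2 * q - 2) : ℝ) : ℂ) *
          (starRingEnd ℂ) (u x) ^ 2 * (fderiv ℝ u x v) ^ 2) := by
  have hu1 : ContDiff ℝ 1 u := hu.of_le one_le_two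
  have hdu : ContDiff ℝ 1 (fun x => fderiv ℝ u x v) :=
    (hu.fderiv_right (m := 1) (by norm_num)).clm_apply contDiff_const
  have hD : ∀ x, iteratedFDeriv ℝ 2 u x ![v, v] = fderiv ℝ (fun x => fderiv ℝ u x v) x v := by
    intro x
    rw [iteratedFDeriv_two_apply, fderiv_clm_apply
      ((hu.fderiv_right (m := 1) (by norm_num)).differentiable one_ne_zero x)
      (differentiableAt_const v)]
    simp
  have hmu := hu.continuous.measurable
  have hmc : Measurable fun x => (starRingEnd ℂ) (u x) :=
    Complex.continuous_conj.measurable.comp hmu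
  have hm1 := hdu.continuous.measurable
  have hm2 : Measurable fun x => iteratedFDeriv ℝ 2 u x ![v, v] := by
    simp_rw [hD]
    exact ((hdu.continuous_fderiv one_ne_zero).clm_apply continuous_const).measurable
  have hB₀' : 0 ≤ B₀ := (norm_nonneg _).trans (hB₀ 0)
  have hA := integrable_rpow_mul_conj_mul_fderiv (y := y) hq hδ hu1 hB₀ v hB₁
  have hB := integrable_phi_mul_rpow_mul (y := y) hq hδ hu1 hB₀
    (F := fun x => ((‖fderiv ℝ u x v‖ ^ 2 : ℝ) : ℂ)) (C := B₁ ^ 2)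
    (Complex.measurable_ofReal.comp (hm1.norm.pow_const 2)) fun x => by
      rw [Complex.norm_real, norm_pow, norm_norm]
      gcongr
      exact hB₁ x
  have hC := integrable_phi_mul_rpow_sub_two_mul (y := y) hq hδ hu1 hB₀
    (F := fun x => fderiv ℝ u x v ^ 2) (C := B₁ ^ 2) (hm1.pow_const 2) fun x => by
      rw [norm_pow]
      gcongr
      exact hB₁ x
  have hL := integrable_phi_mul_rpow_mul (y := y) hq hδ hu1 hB₀
    (F := fun x => (starRingEnd ℂ) (u x) * iteratedFDeriv ℝ 2 u x ![v, v]) (C := B₀ * B₂)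
    (hmc.mul hm2) fun x => by
      rw [norm_mul, RCLike.norm_conj]
      gcongr
      exacts [hB₀ x, hB₂ x]
  have hP := integrable_phi_mul_rpow_mul (y := y) hq hδ hu1 hB₀
    (F := fun x => (starRingEnd ℂ) (u x) * fderiv ℝ u x v) (C := B₀ * B₁)
    (hmc.mul hm1) fun x => by
      rw [norm_mul, RCLike.norm_conj]
      gcongr
      exacts [hB₀ x, hB₁ x]
  simp only [← mul_assoc _ ((starRingEnd ℂ) _)] at hL hP
  refine ⟨hL, hB, hC, ?_⟩
  choose L hLd hLv using fun x => fderiv_weight_mul_rpow_mul_conj hq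
    ((contDiff_phi (δ := δ) (y := y)).differentiable one_ne_zero x)
    (hu1.differentiable one_ne_zero x)
  have hsum := (hA.add (hB.const_mul ((q : ℂ) + 1))).add (hC.const_mul (q : ℂ))
  have hibp := integral_bilinear_hasFDerivAt_right_eq_neg_left_of_integrable
    (B := ContinuousLinearMap.mul ℝ ℂ) (μ := volume) (v := v) (f' := L)
    (g := fun x => fderiv ℝ u x v) (g' := fun x => fderiv ℝ (fun x => fderiv ℝ u x v) x)
    (hsum.congr (Filter.Eventually.of_forall fun x => (hLv x v).symm))
    (by simpa only [← hD, ContinuousLinearMap.mul_apply'] using hL) hP (fun x _ => hLd x)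
    (fun x _ => (hdu.differentiable one_ne_zero x).hasFDerivAt)
  simp only [ContinuousLinearMap.mul_apply', ← hD, hLv] at hibp
  rw [hibp, integral_add (by exact hA.add (hB.const_mul _)) (hC.const_mul _),
    integral_add hA (hB.const_mul _), integral_const_mul, integral_const_mul]
  ring

end Directional

/-- Integration by parts identity:
`∫ φ |u|^{2q} conj(u) Δu = −∫ |u|^{2q} conj(u) (∇φ·∇u) − (q+1) ∫ φ |u|^{2q} |∇u|²
  − q ∫ φ |u|^{2q−2} conj(u)² (∇u·∇u)`,
where the last integrand is `0` wherever `u` vanishes. -/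
theorem integration_by_parts_identity (d : ℕ) (hd : 1 ≤ d) (q : ℝ) (hq : 1 / 2 < q)
    (δ : ℝ) (hδ : 0 < δ) (y : EuclideanSpace ℝ (Fin d))
    (u : EuclideanSpace ℝ (Fin d) → ℂ)
    (hu : ContDiff ℝ (⊤ : ℕ∞) u) (hub : ∀ n : ℕ, ∃ B : ℝ, ∀ x, ‖iteratedFDeriv ℝ n u x‖ ≤ B) :
    (∫ x, (phi d δ y x : ℂ) * ((‖u x‖ ^ (2 * q) : ℝ) : ℂ) *
        (starRingEnd ℂ) (u x) * lap d u x) =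
      -(∫ x, ((‖u x‖ ^ (2 * q) : ℝ) : ℂ) * (starRingEnd ℂ) (u x) *
          (∑ j : Fin d, ((fderiv ℝ (phi d δ y) x (EuclideanSpace.single j (1 : ℝ)) : ℝ) : ℂ) *
            fderiv ℝ u x (EuclideanSpace.single j (1 : ℝ))))
      - ((q : ℂ) + 1) * (∫ x, (phi d δ y x : ℂ) * ((‖u x‖ ^ (2 * q) : ℝ) : ℂ) *
          ((∑ j : Fin d, ‖fderiv ℝ u x (EuclideanSpace.single j (1 : ℝ))‖ ^ 2 : ℝ) : ℂ))
      - (q : ℂ) * (∫ x, if u x = 0 then (0 : ℂ) else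
          (phi d δ y x : ℂ) * ((‖u x‖ ^ (2 * q - 2) : ℝ) : ℂ) * ((starRingEnd ℂ) (u x)) ^ 2 *
            (∑ j : Fin d, (fderiv ℝ u x (EuclideanSpace.single j (1 : ℝ))) ^ 2)) := by
  obtain ⟨B₀, hB₀⟩ := hub 0
  obtain ⟨B₁, hB₁⟩ := hub 1
  obtain ⟨B₂, hB₂⟩ := hub 2
  simp only [norm_iteratedFDeriv_zero] at hB₀
  simp only [norm_iteratedFDeriv_one] at hB₁
  have hu2 : ContDiff ℝ 2 u := contDiff_infty.1 hu 2
  have hB₁' (j : Fin d) (x) : ‖fderiv ℝ u x (EuclideanSpace.single j (1 : ℝ))‖ ≤ B₁ := by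
    simpa using (fderiv ℝ u x).le_of_opNorm_le (hB₁ x) (EuclideanSpace.single j (1 : ℝ))
  have hB₂' (j : Fin d) (x) : ‖iteratedFDeriv ℝ 2 u x
      ![EuclideanSpace.single j (1 : ℝ), EuclideanSpace.single j (1 : ℝ)]‖ ≤ B₂ := by
    simpa using (iteratedFDeriv ℝ 2 u x).le_of_opNorm_le (hB₂ x)
      ![EuclideanSpace.single j (1 : ℝ), EuclideanSpace.single j (1 : ℝ)]
  have hite (x) : (if u x = 0 then (0 : ℂ) else
      (phi d δ y x : ℂ) * ((‖u x‖ ^ (2 * q - 2) : ℝ) : ℂ) * ((starRingEnd ℂ) (u x)) ^ 2 *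
        (∑ j : Fin d, (fderiv ℝ u x (EuclideanSpace.single j (1 : ℝ))) ^ 2)) =
      (phi d δ y x : ℂ) * ((‖u x‖ ^ (2 * q - 2) : ℝ) : ℂ) * ((starRingEnd ℂ) (u x)) ^ 2 *
        (∑ j : Fin d, (fderiv ℝ u x (EuclideanSpace.single j (1 : ℝ))) ^ 2) := by
    split_ifs with h
    · simp [h]
    · rfl
  have hdir (j : Fin d) := integral_phi_mul_rpow_mul_conj_mul_iteratedFDeriv (y := y) hq hδ hu2
    hB₀ (EuclideanSpace.single j (1 : ℝ)) (hB₁' j) (hB₂' j)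
  have hA (j : Fin d) := integrable_rpow_mul_conj_mul_fderiv (y := y) hq hδ
    (hu2.of_le one_le_two) hB₀ (EuclideanSpace.single j (1 : ℝ)) (hB₁' j)
  simp only [hite]
  simp only [lap, Complex.ofReal_sum, Finset.mul_sum]
  rw [integral_finsetSum _ fun j _ => (hdir j).1, integral_finsetSum _ fun j _ => hA j,
    integral_finsetSum _ fun j _ => (hdir j).2.1, integral_finsetSum _ fun j _ => (hdir j).2.2.1,
    Finset.sum_congr rfl fun j _ => (hdir j).2.2.2, Finset.sum_sub_distrib,
    Finset.sum_sub_distrib, Finset.sum_neg_distrib, Finset.mul_sum, Finset.mul_sum]
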